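/- Every permutation class C for which there exists a polynomial p with |C_n| = p(n) for all sufficiently large n is finitely based; that is, there is a finite set B of permutations with C = Av(B). -/

import Mathlib

/-- `σ ≤ π`: the permutation `π` contains the pattern `σ`, i.e. `π` has a subsequence
in the same relative order as `σ`. -/
def PermContains {k n : ℕ} (σ : Equiv.Perm (Fin k)) (π : Equiv.Perm (Fin n)) : Prop :=
  ∃ f : Fin k → Fin n, StrictMono f ∧ ∀ i j : Fin k, σ i < σ j ↔ π (f i) < π (f j)

/-- A permutation class: a set of permutations (of each length) closed downward
under the containment order. -/
def IsPermClass (C : ∀ n : ℕ, Set (Equiv.Perm (Fin n))) : Prop :=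
  ∀ (k n : ℕ) (σ : Equiv.Perm (Fin k)) (π : Equiv.Perm (Fin n)),
    π ∈ C n → PermContains σ π → σ ∈ C k

/-! A permutation with `k` disjoint intervals of positions on which it is not monotone contains at
least `2 ^ k` patterns of length `2 * k`: pick an ascent or a descent in each interval. If the
class has fewer than `2 ^ k` members of that length, a basis element `β` longer than `2 * k`
therefore has no such intervals, so its positions split into `2 * k` monotone pieces. The same
holds for `β⁻¹`, and the two divisions form a grid in which containment is implied by equality of
the directions of rows and columns together with domination of the numbers of points in the cells.
By Dickson's lemma the basis, an antichain, is finite. Such a `k` exists when the enumeration is a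
polynomial `p`, since `p (2 * k) < 2 ^ k` for large `k`. -/

theorem PermContains.refl {n : ℕ} (π : Equiv.Perm (Fin n)) : PermContains π π :=
  ⟨id, strictMono_id, fun _ _ => Iff.rfl⟩

theorem PermContains.trans {l m n : ℕ} {ρ : Equiv.Perm (Fin l)} {σ : Equiv.Perm (Fin m)}
    {π : Equiv.Perm (Fin n)} : PermContains ρ σ → PermContains σ π → PermContains ρ π
  | ⟨f, hf, hρσ⟩, ⟨g, hg, hσπ⟩ => ⟨g ∘ f, hg.comp hf, fun i j => (hρσ i j).trans (hσπ _ _)⟩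

theorem PermContains.length_le {m n : ℕ} {σ : Equiv.Perm (Fin m)} {π : Equiv.Perm (Fin n)} :
    PermContains σ π → m ≤ n
  | ⟨_, hf, _⟩ => by simpa using Fintype.card_le_of_injective _ hf.injective

theorem PermContains.inv {m n : ℕ} {σ : Equiv.Perm (Fin m)} {π : Equiv.Perm (Fin n)} :
    PermContains σ π → PermContains σ⁻¹ π⁻¹
  | ⟨f, hf, hσπ⟩ =>
    ⟨fun i => π (f (σ⁻¹ i)), fun i j hij => (hσπ _ _).1 (by simpa using hij),
      fun i j => by simp [hf.lt_iff_lt]⟩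

theorem PermContains.inv_iff {m n : ℕ} {σ : Equiv.Perm (Fin m)} {π : Equiv.Perm (Fin n)} :
    PermContains σ⁻¹ π⁻¹ ↔ PermContains σ π :=
  ⟨fun h => by simpa using h.inv, PermContains.inv⟩

theorem PermContains.eq {n : ℕ} {σ π : Equiv.Perm (Fin n)} (h : PermContains σ π) : σ = π := by
  obtain ⟨f, hf, hσπ⟩ := h
  obtain rfl : f = id := hf.eq_id
  have hmono : StrictMono (π ∘ ⇑σ⁻¹) := fun i j hij => (hσπ _ _).1 (by simpa using hij)
  ext i
  simpa using congrArg Fin.val (congrFun hmono.eq_id (σ i)).symm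

theorem exists_perm_forall_lt_iff {k : ℕ} {α : Type*} [LinearOrder α] {w : Fin k → α}
    (hw : Function.Injective w) :
    ∃ σ : Equiv.Perm (Fin k), ∀ i j, σ i < σ j ↔ w i < w j := by
  have hsort : StrictMono (w ∘ Tuple.sort w) :=
    (Tuple.monotone_sort w).strictMono_of_injective (hw.comp (Tuple.sort w).injective)
  exact ⟨(Tuple.sort w)⁻¹, fun i j => by simp [← hsort.lt_iff_lt]⟩

/-- The basis of a permutation class: the permutations outside `C` all of whose strictly shorter
patterns lie in `C`. Permutations of all lengths are collected in one sigma type. -/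
def classBasis (C : ∀ n : ℕ, Set (Equiv.Perm (Fin n))) : Set ((n : ℕ) × Equiv.Perm (Fin n)) :=
  {β | β.2 ∉ C β.1 ∧
    ∀ m < β.1, ∀ σ : Equiv.Perm (Fin m), PermContains σ β.2 → σ ∈ C m}

theorem isAntichain_classBasis (C : ∀ n : ℕ, Set (Equiv.Perm (Fin n))) :
    IsAntichain (fun β γ => PermContains β.2 γ.2) (classBasis C) := by
  rintro ⟨m, β⟩ ⟨hβ, -⟩ ⟨n, γ⟩ ⟨-, hγ⟩ hne hcon
  rcases hcon.length_le.lt_or_eq with hlt | heq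
  · exact hβ (hγ m hlt β hcon)
  · obtain rfl : m = n := heq
    exact hne (congrArg _ hcon.eq)

theorem exists_mem_classBasis_permContains {C : ∀ n : ℕ, Set (Equiv.Perm (Fin n))} {n : ℕ}
    {π : Equiv.Perm (Fin n)} (hπ : π ∉ C n) : ∃ β ∈ classBasis C, PermContains β.2 π := by
  induction n using Nat.strong_induction_on with
  | _ n ih =>
    by_cases hmin : ∀ m < n, ∀ σ : Equiv.Perm (Fin m), PermContains σ π → σ ∈ C m
    · exact ⟨⟨n, π⟩, ⟨hπ, hmin⟩, PermContains.refl π⟩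
    · push Not at hmin
      obtain ⟨m, hmn, σ, hσπ, hσ⟩ := hmin
      obtain ⟨β, hβ, hβσ⟩ := ih m hmn hσ
      exact ⟨β, hβ, hβσ.trans hσπ⟩

theorem IsPermClass.mem_iff_forall_classBasis {C : ∀ n : ℕ, Set (Equiv.Perm (Fin n))}
    (hC : IsPermClass C) {n : ℕ} {π : Equiv.Perm (Fin n)} :
    π ∈ C n ↔ ∀ β ∈ classBasis C, ¬ PermContains β.2 π := by
  refine ⟨fun hπ β hβ hcon => hβ.1 (hC _ _ _ _ hπ hcon), fun h => ?_⟩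
  by_contra hπ
  obtain ⟨β, hβ, hcon⟩ := exists_mem_classBasis_permContains hπ
  exact h β hβ hcon

section MonotonePartition

variable {α β : Type*} [LinearOrder α] [LinearOrder β] {r : ℕ} {f : α → β}

/-- `a` cuts `α` into at most `r` consecutive intervals, its fibers (some possibly empty), on each
of which `f` is increasing or decreasing. -/
def IsMonotonePartition (f : α → β) (a : α → Fin r) : Prop :=
  Monotone a ∧ ∀ t, StrictMonoOn f (a ⁻¹' {t}) ∨ StrictAntiOn f (a ⁻¹' {t})

/-- The pieces of a partition on which `f` is increasing; empty and one-point pieces count. -/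
def increasingPieces (f : α → β) (a : α → Fin r) : Set (Fin r) :=
  {t | StrictMonoOn f (a ⁻¹' {t})}

theorem IsMonotonePartition.lt_iff_lt_iff {a : α → Fin r} (ha : IsMonotonePartition f a)
    {i j : α} (hne : i ≠ j) (haij : a i = a j) :
    (i < j ↔ f i < f j) ↔ a i ∈ increasingPieces f a := by
  have hi : i ∈ a ⁻¹' {a i} := rfl
  have hj : j ∈ a ⁻¹' {a i} := haij.symm
  refine ⟨fun h => ?_, fun h => (h.lt_iff_lt hi hj).symm⟩
  refine (ha.2 (a i)).resolve_right fun hanti => ?_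
  rw [hanti.lt_iff_gt hi hj] at h
  rcases lt_or_gt_of_ne hne with hij | hij
  · exact hij.asymm (h.1 hij)
  · exact hij.asymm (h.2 hij)

theorem lt_iff_map_lt_of_monotone_of_ne {a : α → β} (ha : Monotone a) {i j : α}
    (h : a i ≠ a j) : i < j ↔ a i < a j :=
  ⟨fun hij => (ha hij.le).lt_of_ne h, ha.reflect_lt⟩

section Compare

variable {α' β' : Type*} [LinearOrder α'] [LinearOrder β'] {f' : α' → β'} {a : α → Fin r}
  {a' : α' → Fin r} {i j : α} {i' j' : α'}

theorem IsMonotonePartition.lt_iff_lt_of_ne (ha : IsMonotonePartition f a)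
    (ha' : IsMonotonePartition f' a') (hi : a i = a' i') (hj : a j = a' j') (h : a i ≠ a j) :
    i < j ↔ i' < j' := by
  rw [lt_iff_map_lt_of_monotone_of_ne ha.1 h,
    lt_iff_map_lt_of_monotone_of_ne ha'.1 (hi ▸ hj ▸ h), hi, hj]

theorem IsMonotonePartition.lt_iff_lt_iff_of_eq (ha : IsMonotonePartition f a)
    (ha' : IsMonotonePartition f' a') (hinc : increasingPieces f a = increasingPieces f' a')
    (hi : a i = a' i') (hj : a j = a' j') (h : a i = a j) (hne : i ≠ j) (hne' : i' ≠ j') :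
    (i < j ↔ i' < j') ↔ (f i < f j ↔ f' i' < f' j') := by
  have hij := ha.lt_iff_lt_iff hne h
  rw [hinc, hi, ← ha'.lt_iff_lt_iff hne' (hi ▸ hj ▸ h)] at hij
  tauto

end Compare

theorem IsMonotonePartition.castLE {a : α → Fin r} (ha : IsMonotonePartition f a) {s : ℕ}
    (h : r ≤ s) : IsMonotonePartition f (Fin.castLE h ∘ a) := by
  refine ⟨(Fin.strictMono_castLE h).monotone.comp ha.1, fun t => ?_⟩
  by_cases ht : ∃ u, Fin.castLE h u = t
  · obtain ⟨u, rfl⟩ := ht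
    simpa [Set.preimage_comp, Set.preimage, Set.mem_singleton_iff] using ha.2 u
  · exact Or.inl fun i hi => (ht ⟨a i, hi⟩).elim

theorem isMonotonePartition_id {n : ℕ} (f : Fin n → β) : IsMonotonePartition f id :=
  ⟨monotone_id, fun _ => Or.inl (Set.subsingleton_singleton.strictMonoOn f)⟩

theorem IsMonotonePartition.predAbove {a : α → Fin (r + 1)} (ha : IsMonotonePartition f a)
    {t : Fin r} (ht : StrictMonoOn f ((t.predAbove ∘ a) ⁻¹' {t}) ∨
      StrictAntiOn f ((t.predAbove ∘ a) ⁻¹' {t})) :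
    IsMonotonePartition f (t.predAbove ∘ a) := by
  refine ⟨(Fin.predAbove_right_monotone t).comp ha.1, fun u => ?_⟩
  rcases eq_or_ne u t with rfl | hut
  · exact ht
  · have hsub : (t.predAbove ∘ a) ⁻¹' {u} ⊆ a ⁻¹' {t.castSucc.succAbove u} := by
      rintro i rfl
      refine (Fin.succAbove_predAbove fun hi => hut ?_).symm
      simp [hi]
    exact (ha.2 _).imp (·.mono hsub) (·.mono hsub)

/-- In a partition with fewest pieces no two neighbouring pieces can be merged, so pairing up the
pieces `2 * j` and `2 * j + 1` yields `k` non-monotone intervals. -/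
theorem exists_isMonotonePartition_or_forall_not {n : ℕ} (f : Fin n → β) (k : ℕ) :
    (∃ a : Fin n → Fin (k * 2), IsMonotonePartition f a) ∨
      ∃ c : Fin n → ℕ, Monotone c ∧
        ∀ j < k, ¬ (StrictMonoOn f (c ⁻¹' {j}) ∨ StrictAntiOn f (c ⁻¹' {j})) := by
  classical
  have hex : ∃ r, ∃ a : Fin n → Fin r, IsMonotonePartition f a := ⟨n, id, isMonotonePartition_id f⟩
  obtain ⟨r, ⟨a, ha⟩, hmin⟩ : ∃ r, (∃ a : Fin n → Fin r, IsMonotonePartition f a) ∧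
      ∀ s < r, ¬ ∃ a : Fin n → Fin s, IsMonotonePartition f a :=
    ⟨Nat.find hex, Nat.find_spec hex, fun s => Nat.find_min hex⟩
  rcases le_or_gt r (k * 2) with hr | hr
  · exact Or.inl ⟨_, ha.castLE hr⟩
  obtain _ | r := r
  · omega
  refine Or.inr ⟨fun i => a i / 2, fun i i' h => Nat.div_le_div_right (ha.1 h), fun j hj h => ?_⟩
  let t : Fin r := ⟨j * 2, by omega⟩
  have hsub : (t.predAbove ∘ a) ⁻¹' {t} ⊆ (fun i => (a i : ℕ) / 2) ⁻¹' {j} := by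
    intro i hi
    have hpair : a i = t.castSucc ∨ a i = t.succ := by
      by_cases hit : a i = t.castSucc
      · exact Or.inl hit
      · exact Or.inr (by rw [← Fin.succAbove_predAbove hit, show t.predAbove (a i) = t from hi,
          Fin.succAbove_castSucc_self])
    change (a i : ℕ) / 2 = j
    rcases hpair with hit | hit <;> simp only [hit, Fin.val_castSucc, Fin.val_succ, t] <;> omega
  exact hmin r r.lt_succ_self ⟨_, ha.predAbove (h.imp (·.mono hsub) (·.mono hsub))⟩

end MonotonePartition

theorem exists_lt_lt_iff_of_not_strictMonoOn_of_not_strictAntiOn {α β : Type*} [LinearOrder α]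
    [LinearOrder β] {f : α → β} {s : Set α} (hf : Set.InjOn f s)
    (h : ¬ (StrictMonoOn f s ∨ StrictAntiOn f s)) (b : Bool) :
    ∃ x ∈ s, ∃ y ∈ s, x < y ∧ (f x < f y ↔ b) := by
  rw [not_or, StrictMonoOn, StrictAntiOn] at h
  push Not at h
  obtain ⟨⟨x, hx, y, hy, hxy, hdesc⟩, x', hx', y', hy', hxy', hasc⟩ := h
  cases b
  · exact ⟨x, hx, y, hy, hxy, by simpa using hdesc⟩
  · exact ⟨x', hx', y', hy', hxy', by
      simpa using hasc.lt_of_ne (hf.ne hx' hy' hxy'.ne)⟩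

theorem strictMono_divNat_modNat {α : Type*} [Preorder α] {k m : ℕ} {P : Fin k → Fin m → α}
    (hwithin : ∀ j, StrictMono (P j)) (hacross : ∀ j j', j < j' → ∀ s s', P j s < P j' s') :
    StrictMono fun i : Fin (k * m) => P i.divNat i.modNat := by
  intro i i' hii'
  have hdiv : i.divNat ≤ i'.divNat := Nat.div_le_div_right (Fin.le_def.1 hii'.le)
  rcases hdiv.lt_or_eq with hlt | heq
  · exact hacross _ _ hlt _ _
  · have hmod : i.modNat < i'.modNat := by
      have hi := Nat.div_add_mod (i : ℕ) m
      have hi' := Nat.div_add_mod (i' : ℕ) m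
      have hquot : (i : ℕ) / m = i' / m := congrArg Fin.val heq
      rw [hquot] at hi
      simp only [Fin.lt_def, Fin.coe_modNat] at hii' ⊢
      omega
    simpa only [heq] using hwithin _ hmod

section Patterns

variable {n k : ℕ} {π : Equiv.Perm (Fin n)} {c : Fin n → ℕ}

/-- One ascent or descent is chosen in each of the `k` non-monotone intervals, according to `b`;
the bits of `b` are read off the resulting pattern. -/
theorem exists_permContains_forall_lt_iff (hc : Monotone c)
    (h : ∀ j < k, ¬ (StrictMonoOn π (c ⁻¹' {j}) ∨ StrictAntiOn π (c ⁻¹' {j})))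
    (b : Fin k → Bool) :
    ∃ σ : Equiv.Perm (Fin (k * 2)), PermContains σ π ∧
      ∀ j, σ (finProdFinEquiv (j, 0)) < σ (finProdFinEquiv (j, 1)) ↔ b j := by
  choose x hx y hy hxy hπ using fun j : Fin k =>
    exists_lt_lt_iff_of_not_strictMonoOn_of_not_strictAntiOn π.injective.injOn (h j j.2) (b j)
  let P : Fin k → Fin 2 → Fin n := fun j => ![x j, y j]
  have hcP : ∀ j s, c (P j s) = j := by
    intro j s
    fin_cases s
    exacts [hx j, hy j]
  have hmono : StrictMono fun i : Fin (k * 2) => P i.divNat i.modNat := by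
    refine strictMono_divNat_modNat (fun j => ?_) fun j j' hjj' s s' => hc.reflect_lt ?_
    · simpa [P, Fin.strictMono_iff_lt_succ] using hxy j
    · simpa only [hcP, Fin.val_fin_lt] using hjj'
  obtain ⟨σ, hσ⟩ := exists_perm_forall_lt_iff (π.injective.comp hmono.injective)
  refine ⟨σ, ⟨_, hmono, hσ⟩, fun j => ?_⟩
  have hP : ∀ s, P (finProdFinEquiv (j, s)).divNat (finProdFinEquiv (j, s)).modNat = P j s :=
    fun s => congrArg (fun q => P q.1 q.2) (finProdFinEquiv.symm_apply_apply (j, s))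
  rw [hσ, Function.comp_apply, Function.comp_apply, hP, hP]
  exact hπ j

theorem two_pow_le_card_patterns (hc : Monotone c)
    (h : ∀ j < k, ¬ (StrictMonoOn π (c ⁻¹' {j}) ∨ StrictAntiOn π (c ⁻¹' {j}))) :
    2 ^ k ≤ Nat.card {σ : Equiv.Perm (Fin (k * 2)) | PermContains σ π} := by
  choose F hF hbit using exists_permContains_forall_lt_iff hc h
  have hinj : Function.Injective F := fun b b' hbb' => funext fun j =>
    Bool.eq_iff_iff.2 ((hbit b j).symm.trans (hbb' ▸ hbit b' j))
  calc
    2 ^ k = Nat.card (Fin k → Bool) := by simp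
    _ ≤ Nat.card {σ : Equiv.Perm (Fin (k * 2)) | PermContains σ π} :=
      Nat.card_le_card_of_injective (fun b => ⟨F b, hF b⟩) fun _ _ h =>
        hinj (congrArg Subtype.val h)

theorem exists_isMonotonePartition_of_card_patterns_lt
    (h : Nat.card {σ : Equiv.Perm (Fin (k * 2)) | PermContains σ π} < 2 ^ k) :
    ∃ a : Fin n → Fin (k * 2), IsMonotonePartition π a :=
  (exists_isMonotonePartition_or_forall_not π k).resolve_right fun ⟨_, hc, hnot⟩ =>
    (two_pow_le_card_patterns hc hnot).not_gt h

theorem card_patterns_inv (π : Equiv.Perm (Fin n)) (m : ℕ) :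
    Nat.card {σ : Equiv.Perm (Fin m) | PermContains σ π⁻¹} =
      Nat.card {σ : Equiv.Perm (Fin m) | PermContains σ π} := by
  rw [← Set.natCard_inv]
  congr! 3
  ext σ
  simp [PermContains.inv_iff]

end Patterns

/-- A division of the plot of `π` into an `r × r` grid such that `π` is monotone on every column
and `π⁻¹` on every row. -/
structure MonotoneGridding (r : ℕ) {n : ℕ} (π : Equiv.Perm (Fin n)) where
  /-- The column containing a position. -/
  col : Fin n → Fin r
  /-- The row containing a value. -/
  row : Fin n → Fin r
  isMonotonePartition_col : IsMonotonePartition π col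
  isMonotonePartition_row : IsMonotonePartition ⇑π⁻¹ row

theorem nonempty_monotoneGridding_of_length_le {n r : ℕ} (π : Equiv.Perm (Fin n)) (h : n ≤ r) :
    Nonempty (MonotoneGridding r π) :=
  ⟨⟨_, _, (isMonotonePartition_id π).castLE h, (isMonotonePartition_id ⇑π⁻¹).castLE h⟩⟩

theorem nonempty_monotoneGridding_of_card_patterns_lt {n k : ℕ} {π : Equiv.Perm (Fin n)}
    (h : Nat.card {σ : Equiv.Perm (Fin (k * 2)) | PermContains σ π} < 2 ^ k) :
    Nonempty (MonotoneGridding (k * 2) π) := by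
  obtain ⟨a, ha⟩ := exists_isMonotonePartition_of_card_patterns_lt h
  obtain ⟨b, hb⟩ := exists_isMonotonePartition_of_card_patterns_lt
    ((card_patterns_inv π _).trans_lt h)
  exact ⟨⟨a, b, ha, hb⟩⟩

theorem exists_map_strictMonoOn_fibers {α β ι : Type*} [LinearOrder α] [Finite α] [LinearOrder β]
    [Finite β] {c : α → ι} {d : β → ι}
    (h : ∀ t, Nat.card (c ⁻¹' {t}) ≤ Nat.card (d ⁻¹' {t})) :
    ∃ g : α → β, (∀ i, d (g i) = c i) ∧ ∀ t, StrictMonoOn g (c ⁻¹' {t}) := by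
  classical
  have := Fintype.ofFinite α
  have := Fintype.ofFinite β
  have hemb : ∀ t, Nonempty (c ⁻¹' {t} ↪o d ⁻¹' {t}) := fun t =>
    ⟨((Fintype.orderIsoFinOfCardEq _ Nat.card_eq_fintype_card.symm).symm.toOrderEmbedding.trans
      (Fin.castLEOrderEmb (h t))).trans
      (Fintype.orderIsoFinOfCardEq _ Nat.card_eq_fintype_card.symm).toOrderEmbedding⟩
  let e := fun t => (hemb t).some
  have hg : ∀ t (x : c ⁻¹' {t}), (e (c x) ⟨x, rfl⟩ : β) = e t x := by
    rintro _ ⟨x, rfl⟩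
    rfl
  refine ⟨fun i => e (c i) ⟨i, rfl⟩, fun i => (e (c i) ⟨i, rfl⟩).2, fun t x hx y hy hxy => ?_⟩
  simpa only [hg t ⟨x, hx⟩, hg t ⟨y, hy⟩] using Subtype.coe_lt_coe.2 ((e t).strictMono hxy)

namespace MonotoneGridding

variable {r m n : ℕ} {σ : Equiv.Perm (Fin m)} {π : Equiv.Perm (Fin n)}

/-- The grid cell containing the point of the plot of `π` at position `i`. -/
def cell (γ : MonotoneGridding r π) (i : Fin n) : Fin r × Fin r := (γ.col i, γ.row (π i))

/-- Which columns and which rows are increasing. -/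
def directions (γ : MonotoneGridding r π) : Set (Fin r) × Set (Fin r) :=
  (increasingPieces π γ.col, increasingPieces ⇑π⁻¹ γ.row)

/-- The number of points of the plot in each cell. -/
noncomputable def cellCard (γ : MonotoneGridding r π) (p : Fin r × Fin r) : ℕ :=
  Nat.card (γ.cell ⁻¹' {p})

/-- Points in different columns are ordered horizontally by their columns, points in different rows
vertically by their rows, and within one column or row the direction turns either of the two orders
into the other. So the cells and directions determine all comparisons but those inside a cell. -/
theorem lt_iff_lt_and_lt_iff_lt {γ : MonotoneGridding r σ} {δ : MonotoneGridding r π}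
    (hdir : γ.directions = δ.directions) {g : Fin m → Fin n}
    (hcell : ∀ i, δ.cell (g i) = γ.cell i)
    (hmono : ∀ p, StrictMonoOn g (γ.cell ⁻¹' {p})) {i j : Fin m} (hne : i ≠ j) :
    (i < j ↔ g i < g j) ∧ (σ i < σ j ↔ π (g i) < π (g j)) := by
  have hcol : ∀ i, γ.col i = δ.col (g i) := fun i => (congrArg Prod.fst (hcell i)).symm
  have hrow : ∀ i, γ.row (σ i) = δ.row (π (g i)) := fun i => (congrArg Prod.snd (hcell i)).symm
  have hgne : g i ≠ g j := fun h => hne <|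
    (hmono (γ.cell j)).injOn (by simp [← hcell, h]) rfl h
  by_cases hc : γ.col i = γ.col j
  · have hturn := γ.isMonotonePartition_col.lt_iff_lt_iff_of_eq δ.isMonotonePartition_col
      (congrArg Prod.fst hdir) (hcol i) (hcol j) hc hne hgne
    by_cases hr : γ.row (σ i) = γ.row (σ j)
    · have hpos : i < j ↔ g i < g j :=
        ((hmono (γ.cell j)).lt_iff_lt (Prod.ext hc hr) rfl).symm
      exact ⟨hpos, hturn.1 hpos⟩
    · have hval : σ i < σ j ↔ π (g i) < π (g j) :=
        γ.isMonotonePartition_row.lt_iff_lt_of_ne δ.isMonotonePartition_row (hrow i) (hrow j) hr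
      exact ⟨hturn.2 hval, hval⟩
  · have hpos : i < j ↔ g i < g j :=
      γ.isMonotonePartition_col.lt_iff_lt_of_ne δ.isMonotonePartition_col (hcol i) (hcol j) hc
    refine ⟨hpos, ?_⟩
    by_cases hr : γ.row (σ i) = γ.row (σ j)
    · have hturn : (σ i < σ j ↔ π (g i) < π (g j)) ↔ (i < j ↔ g i < g j) := by
        simpa using γ.isMonotonePartition_row.lt_iff_lt_iff_of_eq δ.isMonotonePartition_row
          (congrArg Prod.snd hdir) (hrow i) (hrow j) hr (σ.injective.ne hne) (π.injective.ne hgne)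
      exact hturn.2 hpos
    · exact γ.isMonotonePartition_row.lt_iff_lt_of_ne δ.isMonotonePartition_row (hrow i) (hrow j) hr

theorem permContains {γ : MonotoneGridding r σ} {δ : MonotoneGridding r π}
    (hdir : γ.directions = δ.directions) (hcard : γ.cellCard ≤ δ.cellCard) :
    PermContains σ π := by
  obtain ⟨g, hcell, hmono⟩ := exists_map_strictMonoOn_fibers hcard
  have hlt := fun {i j} => lt_iff_lt_and_lt_iff_lt hdir hcell hmono (i := i) (j := j)
  refine ⟨g, fun i j hij => (hlt hij.ne).1.1 hij, fun i j => ?_⟩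
  rcases eq_or_ne i j with rfl | hne
  · simp
  · exact (hlt hne).2

end MonotoneGridding

theorem partiallyWellOrderedOn_monotoneGridding (r : ℕ) :
    Set.PartiallyWellOrderedOn
      {β : (n : ℕ) × Equiv.Perm (Fin n) | Nonempty (MonotoneGridding r β.2)}
      fun β γ => PermContains β.2 γ.2 := by
  intro f
  have hwqo := (Finite.wellQuasiOrdered (α := Set (Fin r) × Set (Fin r)) (· = ·)).prod
    (wellQuasiOrdered_le (α := Fin r × Fin r → ℕ))
  obtain ⟨i, j, hij, hdir, hcard⟩ := hwqo fun i => ((f i).2.some.directions, (f i).2.some.cellCard)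
  exact ⟨i, j, hij, MonotoneGridding.permContains hdir hcard⟩

theorem isLittleO_eval_natCast_pow {𝕜 : Type*} [NormedField 𝕜] [LinearOrder 𝕜]
    [IsStrictOrderedRing 𝕜] [OrderTopology 𝕜] [Archimedean 𝕜] (p : Polynomial 𝕜) {b : ℝ}
    (hb : 1 < b) : (fun n : ℕ => p.eval (n : 𝕜)) =o[Filter.atTop] fun n : ℕ => b ^ n := by
  have hdeg : p.degree ≤ (Polynomial.X ^ p.natDegree : Polynomial 𝕜).degree := by
    simp [Polynomial.degree_le_natDegree]
  have hO : (fun n : ℕ => p.eval (n : 𝕜)) =O[Filter.atTop] fun n : ℕ => (n : 𝕜) ^ p.natDegree := by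
    simpa only [Function.comp_def, Polynomial.eval_pow, Polynomial.eval_X] using
      (p.isBigO_atTop_of_degree_le _ hdeg).comp_tendsto tendsto_natCast_atTop_atTop
  exact hO.trans_isLittleO (isLittleO_pow_const_const_pow_of_one_lt _ hb)

theorem exists_lt_two_pow_of_eventually_eq_eval {u : ℕ → ℕ} {p : Polynomial ℚ} {N : ℕ}
    (hu : ∀ n, N ≤ n → (u n : ℚ) = p.eval (n : ℚ)) : ∃ k, u (k * 2) < 2 ^ k := by
  have hsmall := isLittleO_eval_natCast_pow (p.comp (Polynomial.X * 2)) one_lt_two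
  obtain ⟨k, hk, hNk⟩ := ((hsmall.def one_half_pos).and (Filter.eventually_ge_atTop N)).exists
  have heval : (p.comp (Polynomial.X * 2)).eval (k : ℚ) = u (k * 2) := by
    simp [hu (k * 2) (by omega)]
  have hnorm : ‖(u (k * 2) : ℚ)‖ = u (k * 2) := by
    rw [← Rat.norm_cast_real, Rat.cast_natCast, Real.norm_natCast]
  rw [heval, hnorm, norm_pow, Real.norm_ofNat] at hk
  have hlt : (u (k * 2) : ℝ) < 2 ^ k :=
    hk.trans_lt (mul_lt_of_lt_one_left (by positivity) one_half_lt_one)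
  exact ⟨k, by exact_mod_cast hlt⟩

theorem polynomial_class_finitely_based_general
    (C : ∀ n : ℕ, Set (Equiv.Perm (Fin n))) (hC : IsPermClass C)
    {k : ℕ} (hk : Nat.card (C (k * 2)) < 2 ^ k) :
    ∃ B : Set ((n : ℕ) × Equiv.Perm (Fin n)), B.Finite ∧
      ∀ (n : ℕ) (π : Equiv.Perm (Fin n)),
        π ∈ C n ↔ ∀ β ∈ B, ¬ PermContains β.2 π := by
  have hgrid : ∀ β ∈ classBasis C, Nonempty (MonotoneGridding (k * 2) β.2) := by
    rintro ⟨n, β⟩ ⟨-, hβ⟩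
    rcases le_or_gt n (k * 2) with hn | hn
    · exact nonempty_monotoneGridding_of_length_le β hn
    · exact nonempty_monotoneGridding_of_card_patterns_lt
        ((Nat.card_mono (Set.toFinite _) (hβ _ hn)).trans_lt hk)
  exact ⟨classBasis C, (isAntichain_classBasis C).finite_of_partiallyWellOrderedOn
    ((partiallyWellOrderedOn_monotoneGridding _).mono hgrid),
    fun _ _ => hC.mem_iff_forall_classBasis⟩

/-- **Theorem.** Every permutation class with eventually polynomial enumeration is finitely
based: it is `Av(B)` for a finite set `B` of permutations. -/
theorem polynomial_class_finitely_based
    (C : ∀ n : ℕ, Set (Equiv.Perm (Fin n))) (hC : IsPermClass C)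
    (hpoly : ∃ (p : Polynomial ℚ) (N : ℕ), ∀ n : ℕ, N ≤ n →
      (Nat.card (C n) : ℚ) = p.eval (n : ℚ)) :
    ∃ B : Set ((n : ℕ) × Equiv.Perm (Fin n)), B.Finite ∧
      ∀ (n : ℕ) (π : Equiv.Perm (Fin n)),
        π ∈ C n ↔ ∀ β ∈ B, ¬ PermContains β.2 π := by
  obtain ⟨p, N, hp⟩ := hpoly
  obtain ⟨k, hk⟩ := exists_lt_two_pow_of_eventually_eq_eval hp
  exact polynomial_class_finitely_based_general C hC hk
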